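/- Let P be a finite pure weighted graded poset of rank d possessing Property UL with constants (c^xyz_j, c^dia_j, c^sqr_j), with c^dia_j > 0 for all j, and let α_0,…,α_{d−1} be real numbers with α_j ≤ 1. For i ≥ 0 let μ'_{i−1} be the maximum over x ∈ P(i−1) of the second largest eigenvalue of M^+_{x,0}. Set a_{l,r} = 1 − Π_{j=r}^{l} (1−α_j)/c^dia_j and b_{l,r} = (1/c^dia_r)·Π_{j=r+1}^{l} (1−α_j)/c^dia_j. Then for every 0 ≤ k ≤ d−1 and every f ∈ C^k with ⟨f,1⟩ = 0 there exist h_j ∈ C^j with ⟨h_j,1⟩ = 0, 0 ≤ j ≤ k, such that ‖f‖² = Σ_{j=0}^k ‖h_j‖² and ‖U_k f‖² ≤ Σ_{j=0}^k (a_{k,j} + Σ_{i=j}^k b_{k,i}·max{μ'_{i−1} − α_i, 0})·‖h_j‖². Consequently, ‖U_k f‖² ≤ (max_{j≤k} a_{k,j} + Σ_{i=0}^k b_{k,i}·max{μ'_{i−1} − α_i, 0})·‖f‖². -/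

import Mathlib

open Finset

attribute [local instance] Classical.propDecidable

noncomputable section

/-- A finite pure weighted graded poset of rank `d`, presented as a rank function
and a weight scheme on a finite partial order `P`. -/
structure WGP (P : Type) [Fintype P] [PartialOrder P] where
  /-- the rank of the poset -/
  d : ℤ
  /-- the rank function -/
  rk : P → ℤ
  rk_mono : Monotone rk
  rk_lb : ∀ x, -1 ≤ rk x
  rk_ub : ∀ x, rk x ≤ d
  rk_covBy : ∀ a b : P, a ⋖ b → rk b = rk a + 1
  bot_unique : ∃! x : P, rk x = -1
  isPure : ∀ x : P, ∃ y : P, rk y = d ∧ x ≤ y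
  /-- the weight function -/
  m : P → ℝ
  m_pos : ∀ x, 0 < m x
  /-- the transition probabilities: `p y x` is `p_{y → x}` -/
  p : P → P → ℝ
  p_nonneg : ∀ y x, 0 ≤ p y x
  p_pos_iff : ∀ y x, 0 < p y x ↔ x ⋖ y
  p_sum : ∀ y, 0 ≤ rk y → ∑ x ∈ univ.filter (fun x => x ⋖ y), p y x = 1
  m_eq : ∀ x, rk x < d → m x = ∑ y ∈ univ.filter (fun y => x ⋖ y), p y x * m y
  m_bot : ∀ x, rk x = -1 → m x = 1

/-- `T` has at most `n` eigenvalues greater than `c`, counted with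
(geometric) multiplicity. -/
def eigMultAboveLe {V : Type*} [AddCommGroup V] [Module ℝ V]
    (T : Module.End ℝ V) (c : ℝ) (n : ℕ) : Prop :=
  ∀ s : Finset ℝ, (∀ μ ∈ s, c < μ) →
    ∑ μ ∈ s, Module.finrank ℝ (T.eigenspace μ) ≤ n

/-- `μ` is the second largest eigenvalue of `T`, counted with multiplicity. -/
def IsSecondLargestEig {V : Type*} [AddCommGroup V] [Module ℝ V]
    (T : Module.End ℝ V) (μ : ℝ) : Prop :=
  T.HasEigenvalue μ ∧ eigMultAboveLe T μ 1 ∧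
    ∃ s : Finset ℝ, (∀ ν ∈ s, μ ≤ ν) ∧
      2 ≤ ∑ ν ∈ s, Module.finrank ℝ (T.eigenspace ν)

/-- `ν` is the least eigenvalue of `T`. -/
def IsLeastEig {V : Type*} [AddCommGroup V] [Module ℝ V]
    (T : Module.End ℝ V) (ν : ℝ) : Prop :=
  T.HasEigenvalue ν ∧ ∀ c : ℝ, T.HasEigenvalue c → ν ≤ c

/-- `λ(T) ≤ lam`, i.e. the second largest eigenvalue of `T` (with multiplicity)
is at most `lam` and the least eigenvalue is at least `-lam`. -/
def lamBd {V : Type*} [AddCommGroup V] [Module ℝ V]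
    (T : Module.End ℝ V) (lam : ℝ) : Prop :=
  eigMultAboveLe T lam 1 ∧ ∀ c : ℝ, T.HasEigenvalue c → -lam ≤ c

namespace WGP

variable {P : Type} [Fintype P] [PartialOrder P] (W : WGP P)

/-- The level set `P(i)`. -/
def lvl (i : ℤ) : Finset P := univ.filter (fun x => W.rk x = i)

/-- The weighted inner product on `C^i`. -/
def innerAt (i : ℤ) (f g : P → ℝ) : ℝ := ∑ x ∈ W.lvl i, W.m x * f x * g x

/-- The squared norm on `C^i`. -/
def normSqAt (i : ℤ) (f : P → ℝ) : ℝ := W.innerAt i f f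

/-- The norm on `C^i`. -/
def normAt (i : ℤ) (f : P → ℝ) : ℝ := Real.sqrt (W.normSqAt i f)

/-- The matrix of transition probabilities : entry `(y, x)` is `p_{y→x}`,
which vanishes unless `x ⋖ y`.  This is also the matrix of the up operator. -/
def upMat : Matrix P P ℝ := Matrix.of fun y x => W.p y x

/-- The matrix of the down operator. -/
def downMat : Matrix P P ℝ := Matrix.of fun x y => W.p y x * W.m y / W.m x

/-- The up operator `U`. -/
def Up (f : P → ℝ) : P → ℝ := W.upMat.mulVec f

/-- The down operator `D`. -/
def Down (f : P → ℝ) : P → ℝ := W.downMat.mulVec f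

/-- `chSum x y = Σ_{c ∈ Ch(y→x)} p(c)`, the total `p`-weight of maximal chains
from `x` up to `y` (the entry of the corresponding power of the transition
matrix). -/
def chSum (x y : P) : ℝ := (W.upMat ^ (W.rk y - W.rk x).toNat) y x

/-- The induced weight function of the link `P_x`. -/
def mL (x y : P) : ℝ := W.m y / W.m x * W.chSum x y

/-- The induced transition probabilities of the link `P_x` :
`pL x z y = (p_x)_{z → y}`. -/
def pL (x z y : P) : ℝ := W.p z y * W.chSum x y / W.chSum x z

/-- The level set `P_x(j)` of the link of `x`. -/
def linkLvl (x : P) (j : ℤ) : Finset P :=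
  univ.filter (fun y => x ≤ y ∧ W.rk y = W.rk x + 1 + j)

/-- The inner product of the link `P_x` at link-level `j`. -/
def innerL (x : P) (j : ℤ) (f g : P → ℝ) : ℝ :=
  ∑ y ∈ W.linkLvl x j, W.mL x y * f y * g y

/-- The matrix of the up operator of the link `P_x`. -/
def upMatL (x : P) : Matrix P P ℝ :=
  Matrix.of fun z y => if y ⋖ z ∧ x ≤ y then W.pL x z y else 0

/-- The matrix of the down operator of the link `P_x`. -/
def downMatL (x : P) : Matrix P P ℝ :=
  Matrix.of fun y z => if y ⋖ z then W.pL x z y * W.mL x z / W.mL x y else 0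

/-- The up operator of the link `P_x`. -/
def UpL (x : P) (f : P → ℝ) : P → ℝ := (W.upMatL x).mulVec f

/-- The down operator of the link `P_x`. -/
def DownL (x : P) (f : P → ℝ) : P → ℝ := (W.downMatL x).mulVec f

/-- The up-down walk `M^+_{x,0}` of the link `P_x`. -/
def MplusL (x : P) (f : P → ℝ) : P → ℝ := W.DownL x (W.UpL x f)

/-- The down-up walk `M^-_{x,0}` of the link `P_x`. -/
def MminusL (x : P) (f : P → ℝ) : P → ℝ := W.UpL x (W.DownL x f)

/-- The adjacency matrix. -/
def adjMat : Matrix P P ℝ := Matrix.of fun y x =>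
  if x = y then 0 else
    ∑ z ∈ univ.filter (fun z => x ⋖ z ∧ y ⋖ z),
      W.m z * W.p z x * W.p z y / ((1 - W.p z y) * W.m y)

/-- The adjacency operator. -/
def Adj (f : P → ℝ) : P → ℝ := W.adjMat.mulVec f

/-- The adjacency matrix of the link `P_x`. -/
def adjMatL (x : P) : Matrix P P ℝ := Matrix.of fun y w =>
  if w = y then 0 else
    ∑ z ∈ univ.filter (fun z => w ⋖ z ∧ y ⋖ z),
      W.mL x z * W.pL x z w * W.pL x z y / ((1 - W.pL x z y) * W.mL x y)

/-- The adjacency operator of the link `P_x`. -/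
def AdjL (x : P) (f : P → ℝ) : P → ℝ := (W.adjMatL x).mulVec f

/-- The up-down walk `M^+_l` as an endomorphism of `C^l`. -/
def MplusEnd (l : ℤ) : Module.End ℝ ({x : P // W.rk x = l} → ℝ) :=
  ((W.downMat * W.upMat).submatrix Subtype.val Subtype.val).mulVecLin

/-- The up-down walk `M^+_{x,0}` as an endomorphism of `C^0(P_x)`. -/
def MplusEndL (x : P) : Module.End ℝ ({y : P // x ⋖ y} → ℝ) :=
  ((W.downMatL x * W.upMatL x).submatrix Subtype.val Subtype.val).mulVecLin

/-- The adjacency operator `A_x` of the link `P_x` as an endomorphism of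
`C^0(P_x)`. -/
def AdjEndL (x : P) : Module.End ℝ ({y : P // x ⋖ y} → ℝ) :=
  ((W.adjMatL x).submatrix Subtype.val Subtype.val).mulVecLin

/-- A standard weight scheme. -/
def Standard : Prop :=
  ∀ y x : P, x ⋖ y → W.p y x = 1 / ((univ.filter (fun z => z ⋖ y)).card : ℝ)

/-- `P` is lower regular at level `i` with constant `N`. -/
def LowerRegAt (i : ℤ) (N : ℕ) : Prop :=
  ∀ y : P, W.rk y = i → (univ.filter (fun z => z ⋖ y)).card = N

/-- `P` is middle regular at level `i` with constant `N`. -/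
def MiddleRegAt (i : ℤ) (N : ℕ) : Prop :=
  ∀ x z : P, W.rk x = i + 1 → W.rk z = i - 1 → z < x →
    (univ.filter (fun y => z ⋖ y ∧ y ⋖ x)).card = N

/-- `P` is `∨∧`-regular at level `i` with constant `N`. -/
def WedgeRegAt (i : ℤ) (N : ℕ) : Prop :=
  ∀ y₁ y₂ : P, W.rk y₁ = i → W.rk y₂ = i → y₁ ≠ y₂ → (∃ z, y₁ ⋖ z ∧ y₂ ⋖ z) →
    (univ.filter (fun s => s ⋖ y₁ ∧ s ⋖ y₂)).card = N

/-- `P` is `⅄`-regular with constant `R`. -/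
def WyeReg (R : ℕ) : Prop :=
  ∀ u y₁ y₂ : P, W.rk u = 2 → W.rk y₁ = 0 → W.rk y₂ = 0 → y₁ ≠ y₂ →
    y₁ < u → y₂ < u →
    (univ.filter (fun z => y₁ ⋖ z ∧ y₂ ⋖ z ∧ z ⋖ u)).card = R

/-- Property UL.1 with constants `c`. -/
def UL1 (c : ℤ → ℝ) : Prop :=
  ∀ l : ℤ, 0 ≤ l → l < W.d → ∀ y : P, W.rk y = l → ∀ x : P, y ⋖ x →
    ∑ z ∈ univ.filter (fun z => z ⋖ y), W.p y z ^ 2 / W.chSum z x = c l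

/-- Property UL.2 with constants `c`. -/
def UL2 (c : ℤ → ℝ) : Prop :=
  ∀ l : ℤ, 0 ≤ l → l < W.d → ∀ y₁ y₂ : P, W.rk y₁ = l → W.rk y₂ = l → y₁ ≠ y₂ →
    ∀ x : P, y₁ ⋖ x → y₂ ⋖ x →
    ∑ z ∈ univ.filter (fun z => z ⋖ y₁ ∧ z ⋖ y₂),
      W.p y₁ z * W.p y₂ z / W.chSum z x = c l

/-- Property UL.3 with constants `c`. -/
def UL3 (c : ℤ → ℝ) : Prop :=
  ∀ l : ℤ, 0 ≤ l → l < W.d → ∀ y : P, W.rk y = l →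
    ∑ x ∈ univ.filter (fun x => y ⋖ x), W.m x * W.p x y ^ 2 = c l * W.m y

/-- Property AL. -/
def AL : Prop :=
  ∀ l : ℤ, 0 ≤ l → l ≤ W.d - 1 → ∀ x y : P, W.rk x = l → W.rk y = l → x ≠ y →
    ∑ z ∈ univ.filter (fun z => x ⋖ z ∧ y ⋖ z),
        W.m z * W.p z x * W.p z y / (1 - W.p z x)
    = ∑ z ∈ univ.filter (fun z => x ⋖ z ∧ y ⋖ z),
        W.m z * W.p z x * W.p z y *
          ∑ s ∈ univ.filter (fun s => s ⋖ x ∧ s ⋖ y),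
            W.p x s * W.p y s / (W.chSum s z - W.p z x * W.p x s)

/-- Equation TL.1 with constant `c`. -/
def TL1 (c : ℝ) : Prop :=
  ∀ y : P, W.rk y = 0 →
    c * W.m y = ∑ z ∈ univ.filter (fun z => y ⋖ z), W.m z * W.p z y ^ 2 *
      ∑ x ∈ univ.filter (fun x => x ⋖ z ∧ x ≠ y), W.p z x / (1 - W.p z x) ^ 2

/-- Equation TL.2 with constant `c`. -/
def TL2 (c : ℝ) : Prop :=
  ∀ y₁ y₂ : P, W.rk y₁ = 0 → W.rk y₂ = 0 → y₁ ≠ y₂ →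
    c * ∑ z ∈ univ.filter (fun z => y₁ ⋖ z ∧ y₂ ⋖ z),
          W.m z * W.p z y₁ * W.p z y₂ / (1 - W.p z y₁)
    = ∑ z ∈ univ.filter (fun z => y₁ ⋖ z ∧ y₂ ⋖ z),
        W.m z * W.p z y₁ * W.p z y₂ *
          ∑ x ∈ univ.filter (fun x => x ⋖ z ∧ x ≠ y₁ ∧ x ≠ y₂),
            W.p z x / (1 - W.p z x) ^ 2

/-- Equation TL.3 with constant `c`. -/
def TL3 (c : ℝ) : Prop :=
  ∀ y : P, W.rk y = 0 →
    c * W.m y =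
      ∑ x ∈ univ.filter (fun x => W.rk x = 0 ∧ x ≠ y),
        ∑ z ∈ univ.filter (fun z => x ⋖ z ∧ y ⋖ z),
          ∑ w ∈ univ.filter (fun w => w ≠ z ∧ x ⋖ w ∧ y ⋖ w),
            ∑ u ∈ univ.filter (fun u => z ⋖ u ∧ w ⋖ u),
              W.m u * W.p u z * W.p u w * W.p w y * W.p z y * W.p w x * W.p z x /
                (W.chSum x u * (1 - W.p u z * W.p z x / W.chSum x u) *
                  (1 - W.p w x) * (1 - W.p z x))

/-- Equation TL.4 with constant `c`. -/
def TL4 (c : ℝ) : Prop :=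
  ∀ y₁ y₂ : P, W.rk y₁ = 0 → W.rk y₂ = 0 → y₁ ≠ y₂ →
    c * ∑ z ∈ univ.filter (fun z => y₁ ⋖ z ∧ y₂ ⋖ z),
          W.m z * W.p z y₁ * W.p z y₂ / (1 - W.p z y₁)
    = ∑ x ∈ univ.filter (fun x => W.rk x = 0 ∧ x ≠ y₁ ∧ x ≠ y₂),
        ∑ z ∈ univ.filter (fun z => x ⋖ z ∧ y₂ ⋖ z),
          ∑ w ∈ univ.filter (fun w => w ≠ z ∧ x ⋖ w ∧ y₁ ⋖ w),
            ∑ u ∈ univ.filter (fun u => z ⋖ u ∧ w ⋖ u),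
              W.m u * W.p u z * W.p u w * W.p w y₁ * W.p z y₂ * W.p w x * W.p z x /
                (W.chSum x u * (1 - W.p u z * W.p z x / W.chSum x u) *
                  (1 - W.p w x) * (1 - W.p z x))

/-- The induced function `f̂_x ∈ C^0(P_x)` of `f ∈ C^0`. -/
def hatF (x : P) (f : P → ℝ) : P → ℝ := fun z =>
  (1 / (1 - W.p z x)) * ∑ y ∈ univ.filter (fun y => y ≠ x ∧ y ⋖ z), W.p z y * f y

/-- `P` is connected: the Markov chain `M^+_0` on `P(0)` is irreducible. -/
def Connected : Prop :=
  ∀ y z : P, W.rk y = 0 → W.rk z = 0 →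
    ∃ j : ℕ, 0 < j ∧ ((W.downMat * W.upMat) ^ j) z y ≠ 0

/-- The link `P_x` is connected: the Markov chain `M^+_{x,0}` on `P_x(0)` is
irreducible. -/
def LinkConnected (x : P) : Prop :=
  ∀ y z : P, x ⋖ y → x ⋖ z →
    ∃ j : ℕ, 0 < j ∧ ((W.downMatL x * W.upMatL x) ^ j) z y ≠ 0

/-- `c` is a nontrivial eigenvalue of the adjacency operator `A` of `P`,
i.e. one with an eigenvector orthogonal to the constants. -/
def IsNontrivEigAdj (c : ℝ) : Prop :=
  ∃ f : P → ℝ, (∃ y, W.rk y = 0 ∧ f y ≠ 0) ∧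
    (∀ y, W.rk y = 0 → W.Adj f y = c * f y) ∧
    W.innerAt 0 f (fun _ => 1) = 0

/-- `c` is a nontrivial eigenvalue of the adjacency operator `A_x` of the
link `P_x`. -/
def IsNontrivEigAdjL (x : P) (c : ℝ) : Prop :=
  ∃ f : P → ℝ, (∃ y, x ⋖ y ∧ f y ≠ 0) ∧
    (∀ y, x ⋖ y → W.AdjL x f y = c * f y) ∧
    W.innerL x 0 f (fun _ => 1) = 0

end WGP


theorem aux_unique {ι : Type*} [Fintype ι] (T : Module.End ℝ (ι → ℝ)) (μ a b : ℝ)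
    (h : eigMultAboveLe T μ 1) (u v : ι → ℝ) (hu : T u = a • u) (hv : T v = b • v)
    (ha : μ < a) (hb : μ < b) : ¬ LinearIndependent ℝ ![u, v] := by
  intro hli
  have hu0 : u ≠ 0 := by simpa using hli.ne_zero 0
  have hv0 : v ≠ 0 := by simpa using hli.ne_zero 1
  have mu : u ∈ T.eigenspace a := Module.End.mem_eigenspace_iff.2 hu
  have mv : v ∈ T.eigenspace b := Module.End.mem_eigenspace_iff.2 hv
  by_cases hab : a = b
  · subst hab
    have h1 := h {a} (by simpa using ha)
    rw [Finset.sum_singleton] at h1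
    have hle : Submodule.span ℝ (Set.range ![u, v]) ≤ T.eigenspace a := by
      rw [Submodule.span_le]
      rintro x ⟨i, rfl⟩
      fin_cases i
      · exact mu
      · exact mv
    have h2 := Submodule.finrank_mono hle
    rw [finrank_span_eq_card hli] at h2
    simp at h2
    omega
  · have h1 := h {a, b} (by intro x hx; simp at hx; rcases hx with rfl | rfl <;> assumption)
    rw [Finset.sum_pair hab] at h1
    have e1 : 0 < Module.finrank ℝ (T.eigenspace a) :=
      (Submodule.one_le_finrank_iff).2 (fun hb => hu0 (by rw [hb] at mu; simpa using mu))
    have e2 : 0 < Module.finrank ℝ (T.eigenspace b) :=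
      (Submodule.one_le_finrank_iff).2 (fun hb => hv0 (by rw [hb] at mv; simpa using mv))
    omega

theorem aux_cs {ι : Type*} [Fintype ι] (w f : ι → ℝ) (hw : ∀ i, 0 < w i)
    (hs : ∑ i, w i = 1) : (∑ i, w i * f i) ^ 2 ≤ ∑ i, w i * f i ^ 2 := by
  have h : 0 ≤ ∑ i, w i * (f i - ∑ j, w j * f j) ^ 2 :=
    Finset.sum_nonneg fun i _ => mul_nonneg (hw i).le (sq_nonneg _)
  set A := ∑ j, w j * f j with hA
  have e : ∑ i, w i * (f i - A) ^ 2 = (∑ i, w i * f i ^ 2) - A ^ 2 := by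
    calc ∑ i, w i * (f i - A) ^ 2 = ∑ i, (w i * f i ^ 2 - 2 * A * (w i * f i) + A ^ 2 * w i) :=
          Finset.sum_congr rfl fun i _ => by ring
      _ = _ := by
          rw [Finset.sum_add_distrib, Finset.sum_sub_distrib, ← Finset.mul_sum, ← Finset.mul_sum,
            hs, ← hA]; ring
  linarith

theorem aux_spec {ι : Type*} [Fintype ι] [DecidableEq ι] (w : ι → ℝ) (hw : ∀ i, 0 < w i)
    (hs : ∑ i, w i = 1) (M : Matrix ι ι ℝ) (hsym : ∀ i j, w i * M i j = w j * M j i)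
    (hM : ∀ i j, 0 ≤ M i j) (hrow : ∀ i, ∑ j, M i j = 1) (μ : ℝ)
    (h : eigMultAboveLe M.mulVecLin μ 1) (f : ι → ℝ) :
    ∑ i, ∑ j, w i * M i j * f i * f j ≤
      (∑ i, w i * f i) ^ 2 + μ * (∑ i, w i * f i ^ 2 - (∑ i, w i * f i) ^ 2) := by
  have hcs := aux_cs w f hw hs
  have hone : ∑ i, ∑ j, w i * M i j * f i * f j ≤ ∑ i, w i * f i ^ 2 := by
    have e1 : ∑ i, ∑ j, w i * M i j * f i ^ 2 = ∑ i, w i * f i ^ 2 := by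
      refine Finset.sum_congr rfl fun i _ => ?_
      calc ∑ j, w i * M i j * f i ^ 2 = (w i * f i ^ 2) * ∑ j, M i j := by
            rw [Finset.mul_sum]; exact Finset.sum_congr rfl fun j _ => by ring
        _ = _ := by rw [hrow, mul_one]
    have e2 : ∑ i, ∑ j, w i * M i j * f j ^ 2 = ∑ i, w i * f i ^ 2 := by
      rw [Finset.sum_comm, ← e1]
      exact Finset.sum_congr rfl fun i _ => Finset.sum_congr rfl fun j _ => by rw [hsym]
    have e3 : ∑ i, ∑ j, w i * M i j * f i * f j ≤
        ∑ i, ∑ j, (w i * M i j * f i ^ 2 + w i * M i j * f j ^ 2) / 2 := by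
      refine Finset.sum_le_sum fun i _ => Finset.sum_le_sum fun j _ => ?_
      have := mul_nonneg (mul_nonneg (hw i).le (hM i j)) (sq_nonneg (f i - f j))
      nlinarith
    simp only [← Finset.sum_div, Finset.sum_add_distrib] at e3
    linarith
  rcases le_or_gt 1 μ with hμ | hμ
  · nlinarith
  -- conjugate
  set r : ι → ℝ := fun i => Real.sqrt (w i) with hr
  have rpos : ∀ i, 0 < r i := fun i => Real.sqrt_pos.2 (hw i)
  have rsq : ∀ i, r i * r i = w i := fun i => Real.mul_self_sqrt (hw i).le
  set A : Matrix ι ι ℝ := Matrix.of fun i j => r i * M i j / r j with hA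
  have hH : A.IsHermitian := by
    ext i j
    simp only [hA, Matrix.conjTranspose_apply, Matrix.of_apply, star_trivial]
    rw [div_eq_div_iff (rpos i).ne' (rpos j).ne']
    have := hsym i j
    rw [← rsq i, ← rsq j] at this
    linarith
  set v := hH.eigenvectorBasis with hv
  set L := hH.eigenvalues with hL
  have hAv : ∀ i, A.mulVec (v i) = L i • (v i : ι → ℝ) := fun i => hH.mulVec_eigenvectorBasis i
  have hT : ∀ i, M.mulVecLin (fun j => v i j / r j) = L i • (fun j => v i j / r j) := by
    intro i
    funext a
    have := congrFun (hAv i) a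
    simp only [Matrix.mulVec, dotProduct, hA, Matrix.of_apply, Pi.smul_apply, smul_eq_mul] at this
    simp only [Matrix.mulVecLin_apply, Matrix.mulVec, dotProduct, Pi.smul_apply, smul_eq_mul]
    rw [← mul_div_assoc, ← this, Finset.sum_div]
    refine Finset.sum_congr rfl fun b _ => ?_
    have := (rpos a).ne'
    field_simp
  have huniq : ∀ i j, μ < L i → μ < L j → i = j := by
    intro i j hi hj
    by_contra hij
    refine aux_unique _ μ _ _ h _ _ (hT i) (hT j) hi hj ?_
    have hli : LinearIndependent ℝ ![v i, v j] := by
      have e : ![v i, v j] = v ∘ ![i, j] := by funext a; fin_cases a <;> rfl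
      rw [e]
      refine v.orthonormal.linearIndependent.comp ![i, j] ?_
      intro a b hab
      fin_cases a <;> fin_cases b
      · rfl
      · exact absurd hab hij
      · exact absurd hab.symm hij
      · rfl
    rw [LinearIndependent.pair_iff] at hli ⊢
    intro s t hst
    apply hli
    ext a
    have := congrFun hst a
    simp only [Pi.add_apply, Pi.smul_apply, smul_eq_mul, Pi.zero_apply] at this
    have h0 := (rpos a).ne'
    simp only [PiLp.add_apply, PiLp.smul_apply, smul_eq_mul, PiLp.zero_apply]
    field_simp at this
    linarith
  set W1 : EuclideanSpace ℝ ι := WithLp.toLp 2 r with hW1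
  set g : EuclideanSpace ℝ ι := WithLp.toLp 2 (fun i => r i * f i) with hg
  have hsymA : ∀ x y : EuclideanSpace ℝ ι, ∑ i, x i * (A.mulVec y) i = ∑ i, (A.mulVec x) i * y i := by
    intro x y
    simp only [Matrix.mulVec, dotProduct, Finset.mul_sum, Finset.sum_mul]
    rw [Finset.sum_comm]
    refine Finset.sum_congr rfl fun i _ => Finset.sum_congr rfl fun j _ => ?_
    have : A j i = A i j := by simpa using congrFun (congrFun hH i) j
    rw [this]; ring
  have hAW : A.mulVec W1 = r := by
    funext i
    simp only [Matrix.mulVec, dotProduct, hA, Matrix.of_apply, hW1]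
    calc ∑ j, r i * M i j / r j * r j = ∑ j, r i * M i j :=
          Finset.sum_congr rfl fun j _ => by have := (rpos j).ne'; field_simp
      _ = r i := by rw [← Finset.mul_sum, hrow, mul_one]
  have inn : ∀ x y : EuclideanSpace ℝ ι, inner ℝ x y = ∑ i, x i * y i := by
    intro x y
    simp [PiLp.inner_apply, mul_comm]
  have hWv : ∀ i, inner ℝ W1 (v i) * L i = inner ℝ W1 (v i) := by
    intro i
    have := hsymA W1 (v i)
    rw [hAv i, hAW] at this
    simp only [inn, Finset.sum_mul]
    simp only [Pi.smul_apply, smul_eq_mul] at this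
    rw [hW1]
    simp only
    rw [← this]
    exact Finset.sum_congr rfl fun j _ => by ring
  have pars : ∀ x y : EuclideanSpace ℝ ι, ∑ i, inner ℝ x (v i) * inner ℝ y (v i) = inner ℝ x y := by
    intro x y
    rw [← v.sum_inner_mul_inner x y]
    exact Finset.sum_congr rfl fun i _ => by rw [real_inner_comm y]
  have hWW : inner ℝ W1 W1 = (1 : ℝ) := by
    rw [inn, ← hs]; exact Finset.sum_congr rfl fun i _ => rsq i
  have hgW : inner ℝ g W1 = ∑ i, w i * f i := by
    rw [inn]; exact Finset.sum_congr rfl fun i _ => by simp only [hg, hW1]; rw [← rsq]; ring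
  have hgg : inner ℝ g g = ∑ i, w i * f i ^ 2 := by
    rw [inn]; exact Finset.sum_congr rfl fun i _ => by simp only [hg]; rw [← rsq]; ring
  have hAg : ∑ i, ∑ j, w i * M i j * f i * f j = ∑ i, L i * inner ℝ g (v i) ^ 2 := by
    have e1 : ∑ i, ∑ j, w i * M i j * f i * f j = inner ℝ g (WithLp.toLp 2 (A.mulVec g)) := by
      rw [inn]
      refine Finset.sum_congr rfl fun i _ => ?_
      simp only [Matrix.mulVec, dotProduct, hA, Matrix.of_apply, hg, Finset.mul_sum]
      refine Finset.sum_congr rfl fun j _ => ?_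
      have := (rpos j).ne'
      rw [← rsq]; field_simp
    rw [e1, ← pars]
    refine Finset.sum_congr rfl fun i _ => ?_
    have : inner ℝ (WithLp.toLp 2 (A.mulVec g)) (v i) = L i * inner ℝ g (v i) := by
      rw [inn, inn]
      simp only
      rw [← hsymA, hAv, Finset.mul_sum]
      exact Finset.sum_congr rfl fun j _ => by simp only [Pi.smul_apply, smul_eq_mul]; ring
    rw [this]; ring
  -- the index of eigenvalue one
  obtain ⟨i0, hi0⟩ : ∃ i, inner ℝ W1 (v i) ≠ 0 := by
    by_contra hcon
    push Not at hcon
    have := pars W1 W1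
    rw [hWW] at this
    simp [hcon] at this
  have hL0 : L i0 = 1 := by
    have := hWv i0
    exact mul_left_cancel₀ hi0 (by rw [this, mul_one])
  have hother : ∀ i, i ≠ i0 → L i ≤ μ := by
    intro i hi
    by_contra hcon
    exact hi (huniq i i0 (not_le.1 hcon) (by rw [hL0]; exact hμ))
  have hW0 : ∀ i, i ≠ i0 → inner ℝ W1 (v i) = (0 : ℝ) := by
    intro i hi
    have h1 := hWv i
    have h2 := hother i hi
    by_contra hne
    have : L i = 1 := mul_left_cancel₀ hne (by rw [h1, mul_one])
    linarith
  have hc : inner ℝ W1 (v i0) ^ 2 = (1 : ℝ) := by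
    have := pars W1 W1
    rw [hWW, Finset.sum_eq_single i0 (fun i _ hi => by rw [hW0 i hi]; simp) (by simp)] at this
    rw [← this]; ring
  have hgw : inner ℝ g W1 ^ 2 = (inner ℝ g (v i0) : ℝ) ^ 2 := by
    have := pars g W1
    rw [Finset.sum_eq_single i0 (fun i _ hi => by rw [hW0 i hi]; simp) (by simp)] at this
    rw [← this, mul_pow, hc, mul_one]
  rw [hAg, ← hgW, ← hgg, hgw, ← pars g g]
  have hterm : ∑ i, L i * inner ℝ g (v i) ^ 2 ≤
      ∑ i, (μ * (inner ℝ g (v i) * inner ℝ g (v i)) +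
        if i = i0 then (1 - μ) * inner ℝ g (v i0) ^ 2 else 0) := by
    refine Finset.sum_le_sum fun i _ => ?_
    by_cases hi : i = i0
    · subst hi; rw [hL0]; simp; nlinarith
    · simp only [if_neg hi]
      have := hother i hi
      nlinarith [sq_nonneg (inner ℝ g (v i) : ℝ)]
  rw [Finset.sum_add_distrib, ← Finset.mul_sum] at hterm
  simp only [Finset.sum_ite_eq', Finset.mem_univ, if_true] at hterm
  linarith

namespace WGP

variable {P : Type} [Fintype P] [PartialOrder P] (W : WGP P)

theorem p_zero {y x : P} (h : ¬ x ⋖ y) : W.p y x = 0 :=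
  le_antisymm (not_lt.1 (fun hh => h ((W.p_pos_iff y x).1 hh))) (W.p_nonneg y x)

theorem p_ne {y x : P} (h : W.p y x ≠ 0) : x ⋖ y := by
  by_contra hh; exact h (W.p_zero hh)

theorem p_sum' (y : P) (h : 0 ≤ W.rk y) : ∑ x, W.p y x = 1 := by
  rw [← W.p_sum y h, Finset.sum_filter]
  refine Finset.sum_congr rfl fun x _ => ?_
  split_ifs with hx
  · rfl
  · exact W.p_zero hx

theorem m_eq' (x : P) (h : W.rk x < W.d) : ∑ y, W.p y x * W.m y = W.m x := by
  rw [W.m_eq x h, Finset.sum_filter]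
  refine Finset.sum_congr rfl fun y _ => ?_
  split_ifs with hx
  · rfl
  · rw [W.p_zero hx, zero_mul]

/-- two-step transition -/
def q2 (z x : P) : ℝ := ∑ y, W.p x y * W.p y z

theorem q2_nonneg (z x : P) : 0 ≤ W.q2 z x :=
  Finset.sum_nonneg fun y _ => mul_nonneg (W.p_nonneg _ _) (W.p_nonneg _ _)

theorem q2_pos {z y x : P} (h : z ⋖ y) (h' : y ⋖ x) : 0 < W.q2 z x := by
  have h1 : 0 < W.p x y * W.p y z := mul_pos ((W.p_pos_iff _ _).2 h') ((W.p_pos_iff _ _).2 h)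
  exact lt_of_lt_of_le h1 (Finset.single_le_sum (f := fun y => W.p x y * W.p y z)
    (fun y _ => mul_nonneg (W.p_nonneg _ _) (W.p_nonneg _ _)) (Finset.mem_univ y))

theorem chSum_one {z y : P} (h : z ⋖ y) : W.chSum z y = W.p y z := by
  have := W.rk_covBy _ _ h
  have e : (W.rk y - W.rk z).toNat = 1 := by omega
  simp [chSum, e, upMat]

theorem chSum_two {z x : P} (h : W.rk x = W.rk z + 2) : W.chSum z x = W.q2 z x := by
  have e : (W.rk x - W.rk z).toNat = 2 := by omega
  simp [chSum, e, upMat, pow_two, Matrix.mul_apply, q2]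

theorem chSum_two' {z y x : P} (h : z ⋖ y) (h' : y ⋖ x) : W.chSum z x = W.q2 z x := by
  apply W.chSum_two
  have := W.rk_covBy _ _ h
  have := W.rk_covBy _ _ h'
  omega

/-- kernel of the link walk -/
def KK (z y y' : P) : ℝ :=
  ∑ x, W.m x * (W.p x y * W.p y z) * (W.p x y' * W.p y' z) / W.q2 z x

theorem KK_symm (z y y' : P) : W.KK z y y' = W.KK z y' y :=
  Finset.sum_congr rfl fun x _ => by ring

theorem KK_nonneg (z y y' : P) : 0 ≤ W.KK z y y' :=
  Finset.sum_nonneg fun x _ => div_nonneg (mul_nonneg (mul_nonneg (W.m_pos _).le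
    (mul_nonneg (W.p_nonneg _ _) (W.p_nonneg _ _))) (mul_nonneg (W.p_nonneg _ _) (W.p_nonneg _ _)))
    (W.q2_nonneg _ _)

theorem KK_zero_left {z y y' : P} (h : ¬ z ⋖ y) : W.KK z y y' = 0 :=
  Finset.sum_eq_zero fun x _ => by rw [W.p_zero h]; simp

theorem KK_zero_right {z y y' : P} (h : ¬ z ⋖ y') : W.KK z y y' = 0 := by
  rw [KK_symm, KK_zero_left _ h]

theorem KK_row (z y : P) (hy : W.rk y < W.d) : ∑ y', W.KK z y y' = W.m y * W.p y z := by
  unfold KK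
  rw [Finset.sum_comm, ← W.m_eq' y hy, Finset.sum_mul]
  refine Finset.sum_congr rfl fun x _ => ?_
  rw [← Finset.sum_div, ← Finset.mul_sum]
  change _ * W.q2 z x / _ = _
  by_cases h0 : W.p x y = 0
  · simp [h0]
  by_cases h1 : W.p y z = 0
  · simp [h1]
  have := (W.q2_pos (W.p_ne h1) (W.p_ne h0)).ne'
  field_simp

theorem link_entry {z y y' : P} (h : z ⋖ y) (h' : z ⋖ y') :
    (W.downMatL z * W.upMatL z) y y' = W.KK z y y' / (W.m y * W.p y z) := by
  rw [Matrix.mul_apply, KK, Finset.sum_div]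
  refine Finset.sum_congr rfl fun x _ => ?_
  simp only [downMatL, upMatL, Matrix.of_apply]
  by_cases h0 : y ⋖ x
  · by_cases h1 : y' ⋖ x
    · rw [if_pos h0, if_pos ⟨h1, h'.le⟩]
      unfold pL mL
      rw [W.chSum_one h, W.chSum_one h', W.chSum_two' h h0]
      have a1 := (W.q2_pos h h0).ne'
      have a2 := (W.m_pos y).ne'
      have a3 := (W.m_pos z).ne'
      have a4 := ((W.p_pos_iff y z).2 h).ne'
      field_simp
    · rw [if_neg (fun hh : y' ⋖ x ∧ z ≤ y' => h1 hh.1), W.p_zero h1]; simp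
  · rw [if_neg h0, W.p_zero h0]; simp

theorem sum_cov (z : P) (F : P → ℝ) (hF : ∀ y, ¬ z ⋖ y → F y = 0) :
    ∑ y, F y = ∑ i : {y : P // z ⋖ y}, F i.1 := by
  have e : ∑ y, F y = ∑ y ∈ univ.filter (fun y => z ⋖ y), F y := by
    rw [Finset.sum_filter]
    refine Finset.sum_congr rfl fun y _ => ?_
    split_ifs with h
    · rfl
    · exact hF y h
  rw [e]
  exact Finset.sum_subtype _ (fun x => by simp) F

theorem Down_eq (f : P → ℝ) (z : P) : W.Down f z = ∑ y, W.p y z * W.m y / W.m z * f y := rfl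

theorem Up_eq (f : P → ℝ) (z : P) : W.Up f z = ∑ y, W.p z y * f y := rfl

theorem link_w (z : P) (hz : W.rk z < W.d) : ∑ i : {y : P // z ⋖ y},
    W.p i.1 z * W.m i.1 / W.m z = 1 := by
  rw [← sum_cov z (fun y => W.p y z * W.m y / W.m z)
    (fun y hy => by simp [W.p_zero hy]), ← Finset.sum_div, W.m_eq' z hz,
    div_self (W.m_pos z).ne']

theorem w_pos (z : P) (i : {y : P // z ⋖ y}) : 0 < W.p i.1 z * W.m i.1 / W.m z :=
  div_pos (mul_pos ((W.p_pos_iff _ _).2 i.2) (W.m_pos _)) (W.m_pos _)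

theorem Down_cov (f : P → ℝ) (z : P) : W.Down f z = ∑ i : {y : P // z ⋖ y},
    W.p i.1 z * W.m i.1 / W.m z * f i.1 := by
  rw [Down_eq, ← sum_cov z (fun y => W.p y z * W.m y / W.m z * f y)
    (fun y hy => by simp [W.p_zero hy])]

theorem Down_sq_cov (f : P → ℝ) (z : P) : ∑ y, W.p y z * W.m y / W.m z * f y ^ 2
    = ∑ i : {y : P // z ⋖ y}, W.p i.1 z * W.m i.1 / W.m z * f i.1 ^ 2 := by
  rw [← sum_cov z (fun y => W.p y z * W.m y / W.m z * f y ^ 2)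
    (fun y hy => by simp [W.p_zero hy])]

theorem Down_sq_le (f : P → ℝ) (z : P) (hz : W.rk z < W.d) :
    W.Down f z ^ 2 ≤ ∑ y, W.p y z * W.m y / W.m z * f y ^ 2 := by
  rw [Down_cov, Down_sq_cov]
  exact aux_cs (fun i : {y : P // z ⋖ y} => W.p i.1 z * W.m i.1 / W.m z) (fun i => f i.1)
    (W.w_pos z) (W.link_w z hz)

theorem link_bound (z : P) (hz : W.rk z + 1 < W.d) (μ : ℝ)
    (h : eigMultAboveLe (W.MplusEndL z) μ 1) (f : P → ℝ) :
    ∑ y, ∑ y', W.KK z y y' * f y * f y' ≤ W.m z * (W.Down f z ^ 2 +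
      μ * ((∑ y, W.p y z * W.m y / W.m z * f y ^ 2) - W.Down f z ^ 2)) := by
  have hrk : ∀ i : {y : P // z ⋖ y}, W.rk i.1 < W.d := fun i => by
    have := W.rk_covBy _ _ i.2; omega
  have hent : ∀ i j : {y : P // z ⋖ y},
      W.p i.1 z * W.m i.1 / W.m z *
        ((W.downMatL z * W.upMatL z).submatrix Subtype.val Subtype.val) i j
        = W.KK z i.1 j.1 / W.m z := by
    intro i j
    rw [Matrix.submatrix_apply, W.link_entry i.2 j.2]
    have a2 := (W.m_pos i.1).ne'
    have a4 := ((W.p_pos_iff i.1 z).2 i.2).ne'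
    field_simp
  have key := aux_spec (fun i : {y : P // z ⋖ y} => W.p i.1 z * W.m i.1 / W.m z)
    (W.w_pos z) (W.link_w z (by omega))
    ((W.downMatL z * W.upMatL z).submatrix Subtype.val Subtype.val)
    (fun i j => by simp only [hent]; rw [KK_symm])
    (fun i j => by
      rw [Matrix.submatrix_apply, W.link_entry i.2 j.2]
      exact div_nonneg (W.KK_nonneg _ _ _) (mul_nonneg (W.m_pos _).le (W.p_nonneg _ _)))
    (fun i => by
      simp only [Matrix.submatrix_apply]
      have : ∀ j : {y : P // z ⋖ y}, (W.downMatL z * W.upMatL z) i.1 j.1 =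
        W.KK z i.1 j.1 / (W.m i.1 * W.p i.1 z) := fun j => W.link_entry i.2 j.2
      simp only [this]
      rw [← Finset.sum_div, ← sum_cov z (fun y => W.KK z i.1 y)
        (fun y hy => W.KK_zero_right hy), W.KK_row _ _ (hrk i)]
      exact div_self (mul_pos (W.m_pos _) ((W.p_pos_iff _ _).2 i.2)).ne')
    μ h (fun i => f i.1)
  simp only [hent] at key
  rw [← Down_cov, ← Down_sq_cov] at key
  have e : ∑ y, ∑ y', W.KK z y y' * f y * f y' =
      W.m z * ∑ i : {y : P // z ⋖ y}, ∑ j : {y : P // z ⋖ y},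
        W.KK z i.1 j.1 / W.m z * f i.1 * f j.1 := by
    rw [sum_cov z (fun y => ∑ y', W.KK z y y' * f y * f y')
      (fun y hy => Finset.sum_eq_zero fun y' _ => by rw [W.KK_zero_left hy]; simp), Finset.mul_sum]
    refine Finset.sum_congr rfl fun i _ => ?_
    rw [sum_cov z (fun y' => W.KK z i.1 y' * f i.1 * f y')
      (fun y hy => by rw [W.KK_zero_right hy]; simp), Finset.mul_sum]
    refine Finset.sum_congr rfl fun j _ => ?_
    have := (W.m_pos z).ne'
    field_simp
  rw [e]
  exact mul_le_mul_of_nonneg_left key (W.m_pos z).le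

theorem sum_lvl (i : ℤ) (F : P → ℝ) : ∑ x ∈ W.lvl i, F x = ∑ x, if W.rk x = i then F x else 0 := by
  rw [lvl, Finset.sum_filter]

/-- summing a quantity on level `l` through level `l-1`. -/
theorem sum_down (l : ℤ) (hl : 0 ≤ l) (F : P → ℝ) :
    ∑ z ∈ W.lvl (l - 1), ∑ y, W.p y z * F y = ∑ y ∈ W.lvl l, F y := by
  rw [sum_lvl, sum_lvl]
  have : ∀ z, (if W.rk z = l - 1 then ∑ y, W.p y z * F y else 0) =
      ∑ y, W.p y z * (if W.rk y = l then F y else 0) := by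
    intro z
    by_cases hz : W.rk z = l - 1
    · rw [if_pos hz]
      refine Finset.sum_congr rfl fun y _ => ?_
      by_cases h : W.p y z = 0
      · simp [h]
      · have := W.rk_covBy _ _ (W.p_ne h)
        rw [if_pos (by omega)]
    · rw [if_neg hz]
      refine (Finset.sum_eq_zero fun y _ => ?_).symm
      by_cases h : W.p y z = 0
      · simp [h]
      · have := W.rk_covBy _ _ (W.p_ne h)
        rw [if_neg (by omega), mul_zero]
  simp only [this]
  rw [Finset.sum_comm]
  refine Finset.sum_congr rfl fun y _ => ?_
  rw [← Finset.sum_mul]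
  split_ifs with h
  · rw [W.p_sum' y (by omega), one_mul]
  · simp

/-- summing a quantity on level `l` through level `l+1`. -/
theorem sum_up (l : ℤ) (G : P → P → ℝ) :
    ∑ x ∈ W.lvl (l + 1), ∑ y, W.p x y * G x y = ∑ y ∈ W.lvl l, ∑ x, W.p x y * G x y := by
  rw [sum_lvl, sum_lvl]
  have : ∀ x, (if W.rk x = l + 1 then ∑ y, W.p x y * G x y else 0) =
      ∑ y, (if W.rk y = l then W.p x y * G x y else 0) := by
    intro x
    by_cases hx : W.rk x = l + 1
    · rw [if_pos hx]
      refine Finset.sum_congr rfl fun y _ => ?_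
      by_cases h : W.p x y = 0
      · simp [h]
      · have := W.rk_covBy _ _ (W.p_ne h)
        rw [if_pos (by omega)]
    · rw [if_neg hx]
      refine (Finset.sum_eq_zero fun y _ => ?_).symm
      by_cases h : W.p x y = 0
      · simp [h]
      · have := W.rk_covBy _ _ (W.p_ne h)
        rw [if_neg (by omega)]
  simp only [this]
  rw [Finset.sum_comm]
  refine Finset.sum_congr rfl fun y _ => ?_
  split_ifs with h
  · rfl
  · simp

theorem adj (l : ℤ) (g f : P → ℝ) :
    W.innerAt (l + 1) (W.Up g) f = W.innerAt l g (W.Down f) := by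
  unfold innerAt
  have e1 : ∀ x, W.m x * W.Up g x * f x = ∑ y, W.p x y * (W.m x * g y * f x) := by
    intro x; rw [Up_eq, Finset.mul_sum, Finset.sum_mul]
    exact Finset.sum_congr rfl fun y _ => by ring
  have e2 : ∀ y, W.m y * g y * W.Down f y = ∑ x, W.p x y * (W.m x * g y * f x) := by
    intro y; rw [Down_eq, Finset.mul_sum]
    refine Finset.sum_congr rfl fun x _ => ?_
    have := (W.m_pos y).ne'
    field_simp
  simp only [e1, e2]
  exact W.sum_up l (fun x y => W.m x * g y * f x)

theorem mass (n : ℕ) (h : (n : ℤ) - 1 ≤ W.d) : ∑ x ∈ W.lvl ((n : ℤ) - 1), W.m x = 1 := by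
  induction n with
  | zero =>
    obtain ⟨b, hb, hu⟩ := W.bot_unique
    have : W.lvl (((0 : ℕ) : ℤ) - 1) = {b} := by
      ext x
      simp only [lvl, Finset.mem_filter, Finset.mem_univ, true_and, Finset.mem_singleton]
      constructor
      · intro hx; exact hu x (by simpa using hx)
      · rintro rfl; simpa using hb
    rw [this, Finset.sum_singleton, W.m_bot b hb]
  | succ n ih =>
    have e : ((n + 1 : ℕ) : ℤ) - 1 = n := by push_cast; ring
    rw [e] at h ⊢
    rw [← W.sum_down n (by omega), ← ih (by omega)]
    refine Finset.sum_congr rfl fun z hz => ?_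
    apply W.m_eq'
    have : W.rk z = (n : ℤ) - 1 := by simpa [lvl] using hz
    omega

theorem mass' (i : ℤ) (h0 : -1 ≤ i) (h : i ≤ W.d) : ∑ x ∈ W.lvl i, W.m x = 1 := by
  have := W.mass (i + 1).toNat (by omega)
  have e : ((i + 1).toNat : ℤ) - 1 = i := by omega
  rwa [e] at this

theorem KK_sum (cxyz cdia csqr : ℤ → ℝ) (h1 : W.UL1 cxyz) (h2 : W.UL2 cdia) (h3 : W.UL3 csqr)
    (l : ℤ) (hl : 0 ≤ l) (hld : l < W.d) (f : P → ℝ) :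
    ∑ z ∈ W.lvl (l - 1), ∑ y, ∑ y', W.KK z y y' * f y * f y' =
      cdia l * W.normSqAt (l + 1) (W.Up f) + (cxyz l - cdia l) * csqr l * W.normSqAt l f := by
  have hS : ∀ x ∈ W.lvl (l + 1), ∀ y y', W.p x y * W.p x y' * (∑ z, W.p y z * W.p y' z / W.q2 z x)
      = W.p x y * W.p x y' * (cdia l + if y = y' then cxyz l - cdia l else 0) := by
    intro x hx y y'
    have hx : W.rk x = l + 1 := by simpa [lvl] using hx
    by_cases h0 : W.p x y = 0
    · simp [h0]
    by_cases h0' : W.p x y' = 0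
    · simp [h0']
    have hy := W.p_ne h0
    have hy' := W.p_ne h0'
    have r1 := W.rk_covBy _ _ hy
    have r2 := W.rk_covBy _ _ hy'
    congr 1
    split_ifs with hyy
    · subst hyy
      rw [add_sub_cancel, ← h1 l hl hld y (by omega) x hy, Finset.sum_filter]
      refine Finset.sum_congr rfl fun z _ => ?_
      split_ifs with hz
      · rw [W.chSum_two' hz hy, pow_two]
      · simp [W.p_zero hz]
    · rw [add_zero, ← h2 l hl hld y y' (by omega) (by omega) hyy x hy hy', Finset.sum_filter]
      refine Finset.sum_congr rfl fun z _ => ?_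
      split_ifs with hz
      · rw [W.chSum_two' hz.1 hy]
      · rw [not_and_or] at hz
        rcases hz with hz | hz <;> simp [W.p_zero hz]
  have hrank : ∀ z x y y', W.p x y * W.p y z * (W.p x y' * W.p y' z) ≠ 0 →
      W.rk x = W.rk z + 2 := by
    intro z x y y' h
    have a1 : W.p x y ≠ 0 := fun h0 => h (by simp [h0])
    have a2 : W.p y z ≠ 0 := fun h0 => h (by simp [h0])
    have := W.rk_covBy _ _ (W.p_ne a1)
    have := W.rk_covBy _ _ (W.p_ne a2)
    omega
  have step1 : ∑ z ∈ W.lvl (l - 1), ∑ y, ∑ y', W.KK z y y' * f y * f y' =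
      ∑ x ∈ W.lvl (l + 1), ∑ y, ∑ y', W.m x * f y * f y' *
        (W.p x y * W.p x y' * (∑ z, W.p y z * W.p y' z / W.q2 z x)) := by
    have l1 : ∑ z ∈ W.lvl (l - 1), ∑ y, ∑ y', W.KK z y y' * f y * f y' =
        ∑ z, ∑ x, ∑ y, ∑ y', if W.rk z = l - 1 then W.m x * f y * f y' *
          (W.p x y * W.p x y' * (W.p y z * W.p y' z / W.q2 z x)) else 0 := by
      rw [sum_lvl]
      refine Finset.sum_congr rfl fun z _ => ?_
      split_ifs with hz
      · have : ∀ y y', W.KK z y y' * f y * f y' = ∑ x, W.m x * f y * f y' *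
          (W.p x y * W.p x y' * (W.p y z * W.p y' z / W.q2 z x)) := by
          intro y y'
          rw [KK, Finset.sum_mul, Finset.sum_mul]
          exact Finset.sum_congr rfl fun x _ => by ring
        simp only [this]
        rw [Finset.sum_comm]
        rw [Finset.sum_congr rfl fun y _ => Finset.sum_comm, Finset.sum_comm]
        exact Finset.sum_congr rfl fun x _ => Finset.sum_comm
      · simp
    have l2 : ∑ x ∈ W.lvl (l + 1), ∑ y, ∑ y', W.m x * f y * f y' *
        (W.p x y * W.p x y' * (∑ z, W.p y z * W.p y' z / W.q2 z x)) =
        ∑ x, ∑ z, ∑ y, ∑ y', if W.rk x = l + 1 then W.m x * f y * f y' *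
          (W.p x y * W.p x y' * (W.p y z * W.p y' z / W.q2 z x)) else 0 := by
      rw [sum_lvl]
      refine Finset.sum_congr rfl fun x _ => ?_
      split_ifs with hx
      · simp only [Finset.mul_sum]
        rw [Finset.sum_congr rfl fun y _ => Finset.sum_comm, Finset.sum_comm]
      · simp
    rw [l1, l2, Finset.sum_comm]
    refine Finset.sum_congr rfl fun x _ => Finset.sum_congr rfl fun z _ =>
      Finset.sum_congr rfl fun y _ => Finset.sum_congr rfl fun y' _ => ?_
    by_cases h : W.p x y * W.p y z * (W.p x y' * W.p y' z) = 0
    · have : W.m x * f y * f y' * (W.p x y * W.p x y' * (W.p y z * W.p y' z / W.q2 z x)) = 0 := by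
        calc _ = W.m x * f y * f y' * (W.p x y * W.p y z * (W.p x y' * W.p y' z)) / W.q2 z x := by
              ring
          _ = 0 := by rw [h]; simp
      simp [this]
    · have := hrank _ _ _ _ h
      have e : (W.rk z = l - 1) ↔ (W.rk x = l + 1) := by omega
      simp only [e]
  have step2 : ∑ x ∈ W.lvl (l + 1), ∑ y, ∑ y', W.m x * f y * f y' *
        (W.p x y * W.p x y' * (∑ z, W.p y z * W.p y' z / W.q2 z x)) =
      ∑ x ∈ W.lvl (l + 1), (cdia l * (W.m x * W.Up f x * W.Up f x) +
        (cxyz l - cdia l) * ∑ y, W.p x y * (W.m x * W.p x y * f y ^ 2)) := by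
    refine Finset.sum_congr rfl fun x hx => ?_
    simp only [hS x hx]
    have : ∀ y y', W.m x * f y * f y' * (W.p x y * W.p x y' *
        (cdia l + if y = y' then cxyz l - cdia l else 0)) =
        cdia l * W.m x * ((W.p x y * f y) * (W.p x y' * f y')) +
          if y = y' then (cxyz l - cdia l) * (W.p x y * (W.m x * W.p x y * f y ^ 2)) else 0 := by
      intro y y'
      split_ifs with h
      · subst h; ring
      · ring
    simp only [this, Finset.sum_add_distrib, Finset.sum_ite_eq, Finset.mem_univ, if_true]
    rw [Finset.mul_sum]
    congr 1
    simp only [← Finset.mul_sum, ← Finset.sum_mul]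
    rw [← Up_eq]; ring
  rw [step1, step2, Finset.sum_add_distrib, ← Finset.mul_sum, ← Finset.mul_sum,
    W.sum_up l (fun x y => W.m x * W.p x y * f y ^ 2), normSqAt, innerAt, normSqAt, innerAt,
    mul_assoc]
  congr 2
  rw [Finset.mul_sum]
  refine Finset.sum_congr rfl fun y hy => ?_
  have hy : W.rk y = l := by simpa [lvl] using hy
  have e : csqr l * (W.m y * f y * f y) = csqr l * W.m y * f y ^ 2 := by ring
  rw [e, ← h3 l hl hld y hy, Finset.sum_filter, Finset.sum_mul]
  refine Finset.sum_congr rfl fun x _ => ?_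
  split_ifs with h
  · ring
  · simp [W.p_zero h]

theorem norm_const (cxyz cdia csqr : ℤ → ℝ) (h1 : W.UL1 cxyz) (h2 : W.UL2 cdia) (h3 : W.UL3 csqr)
    (l : ℤ) (hl : 0 ≤ l) (hld : l < W.d) : (cxyz l - cdia l) * csqr l = 1 - cdia l := by
  have h := W.KK_sum cxyz cdia csqr h1 h2 h3 l hl hld (fun _ => 1)
  have e1 : W.normSqAt l (fun _ => 1) = 1 := by
    refine Eq.trans ?_ (W.mass' l (by omega) (by omega)); simp [normSqAt, innerAt]
  have e2 : W.normSqAt (l + 1) (W.Up fun _ => 1) = 1 := by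
    refine Eq.trans ?_ (W.mass' (l + 1) (by omega) (by omega))
    rw [normSqAt, innerAt]
    refine Finset.sum_congr rfl fun x hx => ?_
    have hx : W.rk x = l + 1 := by simpa [lvl] using hx
    have : W.Up (fun _ => 1) x = 1 := by
      rw [Up_eq]; simp only [mul_one]; exact W.p_sum' x (by omega)
    rw [this]; ring
  have e3 : ∑ z ∈ W.lvl (l - 1), ∑ y, ∑ y', W.KK z y y' * (fun _ => (1 : ℝ)) y *
      (fun _ => (1 : ℝ)) y' = 1 := by
    simp only [mul_one]
    rw [← W.mass' (l - 1) (by omega) (by omega)]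
    refine Finset.sum_congr rfl fun z hz => ?_
    have hz : W.rk z = l - 1 := by simpa [lvl] using hz
    rw [← W.m_eq' z (by omega)]
    refine Finset.sum_congr rfl fun y _ => ?_
    by_cases hy : z ⋖ y
    · have := W.rk_covBy _ _ hy
      rw [W.KK_row z y (by omega), mul_comm]
    · rw [W.p_zero hy, zero_mul]
      exact Finset.sum_eq_zero fun y' _ => W.KK_zero_left hy
  rw [e1, e2, e3] at h
  linarith

theorem normSq_sum (l : ℤ) (hl : 0 ≤ l) (f : P → ℝ) :
    ∑ z ∈ W.lvl (l - 1), W.m z * ∑ y, W.p y z * W.m y / W.m z * f y ^ 2 = W.normSqAt l f := by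
  rw [normSqAt, innerAt, ← W.sum_down l hl]
  refine Finset.sum_congr rfl fun z _ => ?_
  rw [Finset.mul_sum]
  refine Finset.sum_congr rfl fun y _ => ?_
  have := (W.m_pos z).ne'
  field_simp

theorem normSq_nonneg (l : ℤ) (f : P → ℝ) : 0 ≤ W.normSqAt l f := by
  refine Finset.sum_nonneg fun x _ => ?_
  rw [mul_assoc]
  exact mul_nonneg (W.m_pos x).le (mul_self_nonneg _)

theorem Down_norm_le (l : ℤ) (hl : 0 ≤ l) (hld : l < W.d) (f : P → ℝ) :
    W.normSqAt (l - 1) (W.Down f) ≤ W.normSqAt l f := by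
  rw [← W.normSq_sum l hl, normSqAt, innerAt]
  refine Finset.sum_le_sum fun z hz => ?_
  have hz : W.rk z = l - 1 := by simpa [lvl] using hz
  have := mul_le_mul_of_nonneg_left (W.Down_sq_le f z (by omega)) (W.m_pos z).le
  nlinarith

theorem one_step (cxyz cdia csqr : ℤ → ℝ) (h1 : W.UL1 cxyz) (h2 : W.UL2 cdia) (h3 : W.UL3 csqr)
    (l : ℤ) (hl : 0 ≤ l) (hld : l < W.d) (muF : P → ℝ) (μ : ℝ)
    (hmu : ∀ x, W.rk x = l - 1 → eigMultAboveLe (W.MplusEndL x) (muF x) 1)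
    (hle : ∀ x, W.rk x = l - 1 → muF x ≤ μ) (f : P → ℝ) :
    cdia l * W.normSqAt (l + 1) (W.Up f) + (1 - cdia l) * W.normSqAt l f ≤
      W.normSqAt (l - 1) (W.Down f) +
        μ * (W.normSqAt l f - W.normSqAt (l - 1) (W.Down f)) := by
  rw [← W.norm_const cxyz cdia csqr h1 h2 h3 l hl hld,
    ← W.KK_sum cxyz cdia csqr h1 h2 h3 l hl hld]
  have : ∑ z ∈ W.lvl (l - 1), W.m z * (W.Down f z ^ 2 +
      μ * ((∑ y, W.p y z * W.m y / W.m z * f y ^ 2) - W.Down f z ^ 2)) =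
      W.normSqAt (l - 1) (W.Down f) +
        μ * (W.normSqAt l f - W.normSqAt (l - 1) (W.Down f)) := by
    rw [← W.normSq_sum l hl, normSqAt, innerAt, ← Finset.sum_sub_distrib, Finset.mul_sum,
      ← Finset.sum_add_distrib]
    exact Finset.sum_congr rfl fun z _ => by ring
  rw [← this]
  refine Finset.sum_le_sum fun z hz => ?_
  have hz : W.rk z = l - 1 := by simpa [lvl] using hz
  refine (W.link_bound z (by omega) _ (hmu z hz) f).trans ?_
  refine mul_le_mul_of_nonneg_left ?_ (W.m_pos z).le
  have a := W.Down_sq_le f z (by omega)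
  have b := hle z hz
  nlinarith

theorem inner_cs (l : ℤ) (f g : P → ℝ) :
    W.innerAt l f g ^ 2 ≤ W.normSqAt l f * W.normSqAt l g := by
  have := Finset.sum_mul_sq_le_sq_mul_sq (W.lvl l) (fun x => Real.sqrt (W.m x) * f x)
    (fun x => Real.sqrt (W.m x) * g x)
  have s : ∀ x, Real.sqrt (W.m x) * Real.sqrt (W.m x) = W.m x :=
    fun x => Real.mul_self_sqrt (W.m_pos x).le
  have e : ∀ u v : P → ℝ, ∑ x ∈ W.lvl l, (Real.sqrt (W.m x) * u x) * (Real.sqrt (W.m x) * v x)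
      = W.innerAt l u v := by
    intro u v
    refine Finset.sum_congr rfl fun x _ => ?_
    calc _ = Real.sqrt (W.m x) * Real.sqrt (W.m x) * u x * v x := by ring
      _ = _ := by rw [s]
  simp only [pow_two (Real.sqrt _ * _), e] at this
  exact this

theorem inner_down_one (l : ℤ) (hl : 0 ≤ l) (f : P → ℝ) :
    W.innerAt (l - 1) (W.Down f) (fun _ => 1) = W.innerAt l f (fun _ => 1) := by
  unfold innerAt
  rw [← W.sum_down l hl]
  refine Finset.sum_congr rfl fun z _ => ?_
  rw [Down_eq, Finset.mul_sum, Finset.sum_mul]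
  refine Finset.sum_congr rfl fun y _ => ?_
  have := (W.m_pos z).ne'
  field_simp

theorem Up_smul (c : ℝ) (f : P → ℝ) : W.Up (fun x => c * f x) = fun x => c * W.Up f x := by
  funext x
  rw [Up_eq, Up_eq, Finset.mul_sum]
  exact Finset.sum_congr rfl fun y _ => by ring

theorem normSq_smul (l : ℤ) (c : ℝ) (f : P → ℝ) :
    W.normSqAt l (fun x => c * f x) = c ^ 2 * W.normSqAt l f := by
  unfold normSqAt innerAt
  rw [Finset.mul_sum]
  exact Finset.sum_congr rfl fun y _ => by ring

end WGP

/-- coefficient -/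
def coefR (α cdia mu' : ℤ → ℝ) (k j : ℤ) : ℝ :=
  (1 - ∏ t ∈ Finset.Icc j k, (1 - α t) / cdia t)
              + ∑ i ∈ Finset.Icc j k,
                  ((1 / cdia i) * ∏ t ∈ Finset.Icc (i + 1) k, (1 - α t) / cdia t) *
                    max (mu' (i - 1) - α i) 0

theorem coefR_self (α cdia mu' : ℤ → ℝ) (k : ℤ) : coefR α cdia mu' k k =
    1 - (1 - α k) / cdia k + 1 / cdia k * max (mu' (k - 1) - α k) 0 := by
  simp [coefR]

theorem Icc_top (j k : ℤ) (h : j ≤ k) : Finset.Icc j k = insert k (Finset.Icc j (k - 1)) := by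
  ext x; simp only [Finset.mem_Icc, Finset.mem_insert]; omega

theorem coefR_succ (α cdia mu' : ℤ → ℝ) (k j : ℤ) (h : j ≤ k - 1) : coefR α cdia mu' k j =
    1 - (1 - α k) / cdia k + 1 / cdia k * max (mu' (k - 1) - α k) 0 +
      (1 - α k) / cdia k * coefR α cdia mu' (k - 1) j := by
  have hn : ∀ i, k ∉ Finset.Icc i (k - 1) := fun i => by simp
  have hi : ∀ i ∈ Finset.Icc j (k - 1), ((1 / cdia i) *
      ∏ t ∈ Finset.Icc (i + 1) k, (1 - α t) / cdia t) * max (mu' (i - 1) - α i) 0 =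
      (1 - α k) / cdia k * (((1 / cdia i) *
      ∏ t ∈ Finset.Icc (i + 1) (k - 1), (1 - α t) / cdia t) * max (mu' (i - 1) - α i) 0) := by
    intro i hi
    rw [Finset.mem_Icc] at hi
    rw [Icc_top (i + 1) k (by omega), Finset.prod_insert (hn _)]
    ring
  unfold coefR
  rw [Icc_top j k (by omega), Finset.prod_insert (hn _), Finset.sum_insert (hn _),
    Finset.sum_congr rfl hi, ← Finset.mul_sum]
  simp
  ring

theorem step_aux {P : Type} [Fintype P] [PartialOrder P] (W : WGP P)
    (cxyz cdia csqr : ℤ → ℝ)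
    (h1 : W.UL1 cxyz) (h2 : W.UL2 cdia) (h3 : W.UL3 csqr) (l : ℤ) (hl : 0 ≤ l) (hld : l ≤ W.d - 1)
    (hc : 0 < cdia l) (a : ℝ) (muF : P → ℝ) (μ : ℝ)
    (hmuF : ∀ x : P, W.rk x = l - 1 → eigMultAboveLe (W.MplusEndL x) (muF x) 1)
    (hmu' : ∀ x : P, W.rk x = l - 1 → muF x ≤ μ) (f : P → ℝ) :
    W.normSqAt (l + 1) (W.Up f) ≤ (1 - (1 - a) / cdia l + 1 / cdia l * max (μ - a) 0) *
      W.normSqAt l f + (1 - a) / cdia l * W.normSqAt (l - 1) (W.Down f) := by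
  have hs := W.one_step cxyz cdia csqr h1 h2 h3 l hl (by omega) muF μ hmuF hmu' f
  have hd := W.Down_norm_le l hl (by omega) f
  have hd0 := W.normSq_nonneg (l - 1) (W.Down f)
  set N := W.normSqAt l f
  set D := W.normSqAt (l - 1) (W.Down f)
  set U := W.normSqAt (l + 1) (W.Up f)
  set e := max (μ - a) 0 with he
  have e1 : μ - a ≤ e := le_max_left _ _
  have e0 : 0 ≤ e := le_max_right _ _
  have h4 : cdia l * U ≤ cdia l * ((1 - (1 - a) / cdia l + 1 / cdia l * e) * N
      + (1 - a) / cdia l * D) := by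
    have : cdia l * ((1 - (1 - a) / cdia l + 1 / cdia l * e) * N
      + (1 - a) / cdia l * D) = (cdia l - (1 - a) + e) * N + (1 - a) * D := by
      field_simp
    rw [this]
    nlinarith [mul_nonneg (sub_nonneg.2 e1) (sub_nonneg.2 hd), mul_nonneg e0 hd0]
  exact le_of_mul_le_mul_left h4 hc

theorem main_aux {P : Type} [Fintype P] [PartialOrder P] (W : WGP P)
    (cxyz cdia csqr : ℤ → ℝ)
    (h1 : W.UL1 cxyz) (h2 : W.UL2 cdia) (h3 : W.UL3 csqr)
    (hdia : ∀ j : ℤ, 0 ≤ j → j ≤ W.d - 1 → 0 < cdia j)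
    (α : ℤ → ℝ) (hα : ∀ j : ℤ, 0 ≤ j → j ≤ W.d - 1 → α j ≤ 1)
    (muF : P → ℝ) (mu' : ℤ → ℝ) (n : ℕ) (hkd : (n : ℤ) ≤ W.d - 1)
    (hmuF : ∀ x : P, W.rk x ≤ (n : ℤ) - 1 → eigMultAboveLe (W.MplusEndL x) (muF x) 1)
    (hmu' : ∀ x : P, W.rk x ≤ (n : ℤ) - 1 → muF x ≤ mu' (W.rk x))
    (f : P → ℝ) (hf : W.innerAt n f (fun _ => 1) = 0) :
    ∃ j : ℤ, 0 ≤ j ∧ j ≤ n ∧ ∃ h : P → ℝ, W.innerAt j h (fun _ => 1) = 0 ∧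
      W.normSqAt j h = W.normSqAt n f ∧
      W.normSqAt (n + 1) (W.Up f) ≤ coefR α cdia mu' n j * W.normSqAt n f := by
  induction n generalizing f with
  | zero =>
    refine ⟨0, le_refl _, by simp, f, by simpa using hf, by simp, ?_⟩
    have hs := step_aux W cxyz cdia csqr h1 h2 h3 0 le_rfl (by simpa using hkd)
      (hdia 0 le_rfl (by simpa using hkd)) (α 0) muF (mu' (0 - 1))
      (fun x hx => hmuF x (by rw [hx]; simp)) (fun x hx => by
        have := hmu' x (by rw [hx]; simp)
        rwa [hx] at this) f
    have hD : W.normSqAt (0 - 1) (W.Down f) = 0 := by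
      have h0 := W.inner_down_one 0 le_rfl f
      rw [Nat.cast_zero] at hf
      rw [hf] at h0
      obtain ⟨b, hb, hu⟩ := W.bot_unique
      have hl : W.lvl (0 - 1) = {b} := by
        ext x
        simp only [WGP.lvl, Finset.mem_filter, Finset.mem_univ, true_and, Finset.mem_singleton]
        constructor
        · intro hx; exact hu x (by simpa using hx)
        · rintro rfl; simpa using hb
      simp only [WGP.innerAt, hl, Finset.sum_singleton, mul_one] at h0
      simp only [WGP.normSqAt, WGP.innerAt, hl, Finset.sum_singleton, h0, zero_mul]
    rw [hD, mul_zero, add_zero] at hs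
    rw [Nat.cast_zero, coefR_self]
    exact hs
  | succ n ih =>
    have en : ((n + 1 : ℕ) : ℤ) = (n : ℤ) + 1 := by push_cast; ring
    rw [en] at hkd hmuF hmu' hf ⊢
    set l : ℤ := (n : ℤ) + 1 with hl
    have ln : l - 1 = n := by omega
    have hl0 : 0 ≤ l := by omega
    have hc := hdia l hl0 hkd
    have ha := hα l hl0 hkd
    have hA : 0 ≤ (1 - α l) / cdia l := div_nonneg (by linarith) hc.le
    have hs := step_aux W cxyz cdia csqr h1 h2 h3 l hl0 hkd hc (α l) muF (mu' (l - 1))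
      (fun x hx => hmuF x (by rw [hx])) (fun x hx => by
        have := hmu' x (by rw [hx])
        rwa [hx] at this) f
    have hd0 := W.normSq_nonneg (l - 1) (W.Down f)
    have hN0 := W.normSq_nonneg l f
    rcases hd0.eq_or_lt with hD | hD
    · refine ⟨l, hl0, le_rfl, f, hf, rfl, ?_⟩
      rw [← hD, mul_zero, add_zero] at hs
      rw [coefR_self]
      exact hs
    · have hcs := W.inner_cs l (W.Up (W.Down f)) f
      have hadj := W.adj (l - 1) (W.Down f) f
      rw [sub_add_cancel] at hadj
      rw [hadj] at hcs
      change W.normSqAt (l - 1) (W.Down f) ^ 2 ≤ _ at hcs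
      set D := W.normSqAt (l - 1) (W.Down f) with hDdef
      set N := W.normSqAt l f with hNdef
      set c := Real.sqrt (N / D) with hcdef
      have c2 : c ^ 2 = N / D := Real.sq_sqrt (div_nonneg hN0 hD.le)
      have hg0 : W.innerAt n (fun x => c * W.Down f x) (fun _ => 1) = 0 := by
        have h0 := W.inner_down_one l hl0 f
        rw [hf, ln] at h0
        have : W.innerAt n (fun x => c * W.Down f x) (fun _ => 1) =
            c * W.innerAt n (W.Down f) (fun _ => 1) := by
          unfold WGP.innerAt
          rw [Finset.mul_sum]
          exact Finset.sum_congr rfl fun y _ => by ring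
        rw [this, h0, mul_zero]
      have hgN : W.normSqAt n (fun x => c * W.Down f x) = N := by
        rw [W.normSq_smul, c2, ← ln, ← hDdef, div_mul_cancel₀ _ hD.ne']
      obtain ⟨j, hj0, hjn, h, hh0, hhN, hhU⟩ := ih (by omega)
        (fun x hx => hmuF x (by omega)) (fun x hx => hmu' x (by omega)) _ hg0
      rw [hgN] at hhN hhU
      rw [W.Up_smul, W.normSq_smul, c2] at hhU
      have hDU : D ≤ N / D * W.normSqAt l (W.Up (W.Down f)) := by
        rw [div_mul_eq_mul_div, le_div_iff₀ hD]
        linarith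
      refine ⟨j, hj0, by omega, h, hh0, hhN, ?_⟩
      rw [coefR_succ _ _ _ _ _ (by omega), ln]
      rw [ln] at hs
      have := mul_le_mul_of_nonneg_left (hDU.trans hhU) hA
      linarith

/-- norm decomposition and upper bound for `‖U_k f‖²` under
Property UL, in terms of the second eigenvalues of the link walks. -/
theorem stmt9 {P : Type} [Fintype P] [PartialOrder P] (W : WGP P)
    (cxyz cdia csqr : ℤ → ℝ)
    (h1 : W.UL1 cxyz) (h2 : W.UL2 cdia) (h3 : W.UL3 csqr)
    (hdia : ∀ j : ℤ, 0 ≤ j → j ≤ W.d - 1 → 0 < cdia j)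
    (α : ℤ → ℝ) (hα : ∀ j : ℤ, 0 ≤ j → j ≤ W.d - 1 → α j ≤ 1)
    (k : ℤ) (hk0 : 0 ≤ k) (hkd : k ≤ W.d - 1)
    (muF : P → ℝ) (mu' : ℤ → ℝ)
    (hmuF : ∀ x : P, -1 ≤ W.rk x → W.rk x ≤ k - 1 →
      IsSecondLargestEig (W.MplusEndL x) (muF x))
    (hmu' : ∀ i : ℤ, -1 ≤ i → i ≤ k - 1 →
      (∀ x : P, W.rk x = i → muF x ≤ mu' i) ∧ ∃ x : P, W.rk x = i ∧ muF x = mu' i)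
    (f : P → ℝ) (hf : W.innerAt k f (fun _ => 1) = 0) :
    (∃ h : ℤ → P → ℝ,
      (∀ j : ℤ, 0 ≤ j → j ≤ k → W.innerAt j (h j) (fun _ => 1) = 0) ∧
      W.normSqAt k f = ∑ j ∈ Finset.Icc 0 k, W.normSqAt j (h j) ∧
      W.normSqAt (k + 1) (W.Up f)
        ≤ ∑ j ∈ Finset.Icc 0 k,
            ((1 - ∏ t ∈ Finset.Icc j k, (1 - α t) / cdia t)
              + ∑ i ∈ Finset.Icc j k,
                  ((1 / cdia i) * ∏ t ∈ Finset.Icc (i + 1) k, (1 - α t) / cdia t) *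
                    max (mu' (i - 1) - α i) 0) * W.normSqAt j (h j)) ∧
    W.normSqAt (k + 1) (W.Up f)
      ≤ ((Finset.Icc (0 : ℤ) k).sup' (Finset.nonempty_Icc.mpr hk0)
            (fun j => 1 - ∏ t ∈ Finset.Icc j k, (1 - α t) / cdia t)
          + ∑ i ∈ Finset.Icc (0 : ℤ) k,
              ((1 / cdia i) * ∏ t ∈ Finset.Icc (i + 1) k, (1 - α t) / cdia t) *
                max (mu' (i - 1) - α i) 0) * W.normSqAt k f := by
  obtain ⟨n, rfl⟩ := Int.eq_ofNat_of_zero_le hk0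
  obtain ⟨j, hj0, hjn, h, hh0, hhN, hhU⟩ := main_aux W cxyz cdia csqr h1 h2 h3 hdia α hα muF mu' n
    hkd (fun x hx => (hmuF x (W.rk_lb x) hx).2.1)
    (fun x hx => (hmu' (W.rk x) (W.rk_lb x) hx).1 x rfl) f hf
  have hjm : j ∈ Finset.Icc (0 : ℤ) n := Finset.mem_Icc.2 ⟨hj0, hjn⟩
  have hz : ∀ i : ℤ, W.normSqAt i (fun _ => 0) = 0 := fun i => by simp [WGP.normSqAt, WGP.innerAt]
  constructor
  · refine ⟨fun i => if i = j then h else fun _ => 0, ?_, ?_, ?_⟩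
    · intro i _ _
      by_cases hi : i = j
      · subst hi; simpa using hh0
      · simp [hi, WGP.innerAt]
    · rw [Finset.sum_eq_single j (fun i _ hi => by simp only [if_neg hi]; exact hz i)
        (fun hn => absurd hjm hn)]
      simp only [if_true]
      exact hhN.symm
    · rw [Finset.sum_eq_single j (fun i _ hi => by simp only [if_neg hi]; rw [hz, mul_zero])
        (fun hn => absurd hjm hn)]
      simp only [if_true]
      rw [hhN]
      exact hhU
  · refine hhU.trans (mul_le_mul_of_nonneg_right ?_ (W.normSq_nonneg _ _))
    unfold coefR
    refine add_le_add (Finset.le_sup' (fun j => 1 - ∏ t ∈ Finset.Icc j (n : ℤ), (1 - α t) / cdia t)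
      hjm) ?_
    refine Finset.sum_le_sum_of_subset_of_nonneg (Finset.Icc_subset_Icc hj0 le_rfl) ?_
    intro i hi _
    rw [Finset.mem_Icc] at hi
    refine mul_nonneg (mul_nonneg (one_div_pos.2 (hdia i hi.1 (by omega))).le
      (Finset.prod_nonneg fun t ht => ?_)) (le_max_right _ _)
    rw [Finset.mem_Icc] at ht
    exact div_nonneg (by linarith [hα t (by omega) (by omega)]) (hdia t (by omega) (by omega)).le
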